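/- arXiv:0911.1093 — 3 statements merged into one kernel-verified Lean document; each statement's English description precedes it below -/
import Mathlib

section
/- Let p ≥ 5 be a prime, q = 2(p−1), and let x₁, …, x_m be May generators; for each integer j ≥ −1 set c̄_j = Σ_{i=1}^{m} c_j(deg x_i), the sum over i of the j-th digit of deg x_i. Then for all integers −1 ≤ j₁ < j₂ < j₃ one has c̄_{j₁} + c̄_{j₃} − m ≤ c̄_{j₂}. (Equivalently, in the paper's formulation: if there exist −1 ≤ j₁ < j₂ < j₃ with c̄_{j₁} + c̄_{j₃} − m > c̄_{j₂}, then such a monomial ω = x₁⋯x_m cannot exist.) -/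
/-- A formal May spectral sequence generator: `a k`, `h i j`, or `b i j`. -/
inductive MayGen : Type
  | a (k : ℕ)
  | h (i j : ℕ)
  | b (i j : ℕ)
  deriving DecidableEq

namespace MayGen

/-- Validity: the generators `h i j` and `b i j` require `i ≥ 1`. -/
def IsValid : MayGen → Prop
  | a _ => True
  | h i _ => 1 ≤ i
  | b i _ => 1 ≤ i

/-- May filtration of a generator. -/
def filt : MayGen → ℕ
  | a _ => 1
  | h _ _ => 1
  | b _ _ => 2

/-- Internal degree of a generator (at the prime `p`). -/
def deg (p : ℕ) : MayGen → ℕ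
  | a k => 2 * p ^ k - 1
  | h i j => 2 * (p ^ i - 1) * p ^ j
  | b i j => 2 * (p ^ i - 1) * p ^ (j + 1)

end MayGen

/-- Total filtration of a multiset of May generators. -/
def totalFilt (S : Multiset MayGen) : ℕ := (S.map MayGen.filt).sum

/-- Total internal degree of a multiset of May generators. -/
def totalDeg (p : ℕ) (S : Multiset MayGen) : ℕ := (S.map (MayGen.deg p)).sum

/-- An admissible monomial: each exterior generator `h i j` occurs at most once. -/
def Admissible (S : Multiset MayGen) : Prop := ∀ i j : ℕ, S.count (MayGen.h i j) ≤ 1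

/-- The `j`-th digit (`j ≥ -1`) of `t` in the mixed radix `(q, p, p, …)` with
`q = 2(p-1)`:  `t = c₋₁ + q·Σ_{j≥0} c_j p^j` with `0 ≤ c₋₁ < q`, `0 ≤ c_j < p`. -/
def mayDigit (p t : ℕ) (j : ℤ) : ℕ :=
  if j = -1 then t % (2 * (p - 1))
  else if 0 ≤ j then (t / (2 * (p - 1)) / p ^ j.toNat) % p
  else 0

/-!
In the mixed radix `(q, p, p, …)` the degree of a May generator is a string of consecutive `1`s:
`2p^k - 1 = 1 + q (1 + p + ⋯ + p^(k-1))` and `2(p^i - 1)p^j = q (p^j + ⋯ + p^(j+i-1))`. Its digit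
sequence is therefore the indicator function of an interval of positions. If an interval contains
`j₁` and `j₃` it contains `j₂`, so every generator contributes at most `1` to
`c̄_{j₁} + c̄_{j₃} - c̄_{j₂}`.
-/

theorem sum_pow_div_pow {p : ℕ} (hp : 1 < p) (s : Finset ℕ) (n : ℕ) :
    (∑ k ∈ s, p ^ k) / p ^ n = ∑ k ∈ s with n ≤ k, p ^ (k - n) := by
  have hlow : ∑ k ∈ s with ¬n ≤ k, p ^ k < p ^ n :=
    Nat.geomSum_lt hp fun k hk ↦ not_le.mp (Finset.mem_filter.mp hk).2
  have hhigh : ∑ k ∈ s with n ≤ k, p ^ k = p ^ n * ∑ k ∈ s with n ≤ k, p ^ (k - n) := by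
    rw [Finset.mul_sum]
    exact Finset.sum_congr rfl fun k hk ↦ (pow_mul_pow_sub p (Finset.mem_filter.mp hk).2).symm
  rw [← Finset.sum_filter_add_sum_filter_not s (n ≤ ·), hhigh, Nat.mul_add_div (by positivity),
    Nat.div_eq_of_lt hlow, add_zero]

theorem sum_pow_div_pow_mod {p : ℕ} (hp : 1 < p) (s : Finset ℕ) (n : ℕ) :
    (∑ k ∈ s, p ^ k) / p ^ n % p = if n ∈ s then 1 else 0 := by
  have hterm : ∀ k ∈ s.filter (n ≤ ·), p ^ (k - n) % p = if k = n then 1 else 0 := by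
    intro k hk
    obtain rfl | hlt := (Finset.mem_filter.mp hk).2.eq_or_lt
    · simp [Nat.mod_eq_of_lt hp]
    · rw [if_neg hlt.ne']
      exact Nat.mod_eq_zero_of_dvd (dvd_pow_self p (Nat.sub_ne_zero_of_lt hlt))
  rw [sum_pow_div_pow hp, Finset.sum_nat_mod, Finset.sum_congr rfl hterm, Finset.sum_ite_eq']
  simp only [Finset.mem_filter, le_refl, and_true]
  exact Nat.mod_eq_of_lt (by split_ifs <;> omega)

theorem sub_one_mul_sum_Ico_pow {p : ℕ} (hp : 1 ≤ p) (i j : ℕ) :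
    (p - 1) * ∑ k ∈ Finset.Ico j (j + i), p ^ k = (p ^ i - 1) * p ^ j := by
  rw [Finset.sum_Ico_eq_sum_range, Nat.add_sub_cancel_left]
  simp only [pow_add, ← Finset.mul_sum]
  rw [← geom_sum_mul_of_one_le hp]
  ring

theorem indicator_add_indicator_le_of_ordConnected {α : Type*} [Preorder α] {s : Set α}
    (hs : s.OrdConnected) {a b c : α} (hab : a ≤ b) (hbc : b ≤ c) :
    s.indicator (1 : α → ℕ) a + s.indicator 1 c ≤ s.indicator 1 b + 1 := by
  have hle (x : α) : s.indicator (1 : α → ℕ) x ≤ 1 := Set.indicator_apply_le' (by simp) (by simp)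
  by_cases ha : a ∈ s
  · by_cases hc : c ∈ s
    · simp [ha, hc, hs.out ha hc ⟨hab, hbc⟩]
    · simpa [hc] using (hle a).trans (Nat.le_add_left 1 _)
  · simpa [ha] using (hle c).trans (Nat.le_add_left 1 _)

theorem mayDigit_add_mul_sum_pow {p c : ℕ} (hp : 1 < p) (hc : c < 2 * (p - 1)) (s : Finset ℕ)
    {n : ℤ} (hn : -1 ≤ n) :
    mayDigit p (c + 2 * (p - 1) * ∑ k ∈ s, p ^ k) n =
      if n = -1 then c else if n.toNat ∈ s then 1 else 0 := by
  obtain rfl | hlt := hn.eq_or_lt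
  · rw [mayDigit, if_pos rfl, if_pos rfl, Nat.add_mul_mod_self_left, Nat.mod_eq_of_lt hc]
  · have hquot : (c + 2 * (p - 1) * ∑ k ∈ s, p ^ k) / (2 * (p - 1)) = ∑ k ∈ s, p ^ k := by
      rw [Nat.add_mul_div_left _ _ (Nat.zero_lt_of_lt hc), Nat.div_eq_of_lt hc, zero_add]
    rw [mayDigit, if_neg hlt.ne', if_neg hlt.ne', if_pos (by omega), hquot,
      sum_pow_div_pow_mod hp]

namespace MayGen

/-- The interval of positions `n ≥ -1` at which the digit `c_n` of the degree of a generator is `1`,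
all its other digits being `0`. It is the same for every `p > 1`, and it starts at `-1` only for
the `a k`, whose degrees are the ones not divisible by `q`. -/
def digitSupport : MayGen → Set ℤ
  | a k => Set.Ico (-1) k
  | h i j => Set.Ico j (j + i)
  | b i j => Set.Ico (j + 1) (j + 1 + i)

theorem ordConnected_digitSupport (x : MayGen) : x.digitSupport.OrdConnected := by
  cases x <;> exact Set.ordConnected_Ico

theorem deg_a {p : ℕ} (hp : 1 ≤ p) (k : ℕ) :
    (a k).deg p = 1 + 2 * (p - 1) * ∑ l ∈ Finset.range k, p ^ l := by
  have hpow : 1 ≤ p ^ k := Nat.one_le_pow _ _ hp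
  rw [mul_assoc, mul_comm (p - 1), geom_sum_mul_of_one_le hp, deg]
  omega

theorem deg_h {p : ℕ} (hp : 1 ≤ p) (i j : ℕ) :
    (h i j).deg p = 2 * (p - 1) * ∑ l ∈ Finset.Ico j (j + i), p ^ l := by
  rw [mul_assoc, sub_one_mul_sum_Ico_pow hp, deg, mul_assoc]

theorem mayDigit_deg {p : ℕ} (hp : 1 < p) (x : MayGen) {n : ℤ} (hn : -1 ≤ n) :
    mayDigit p (x.deg p) n = x.digitSupport.indicator 1 n := by
  have hdigit_h (i j : ℕ) :
      mayDigit p ((h i j).deg p) n = (h i j).digitSupport.indicator 1 n := by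
    rw [deg_h hp.le, ← zero_add (2 * (p - 1) * _), mayDigit_add_mul_sum_pow hp (by omega) _ hn]
    simp only [digitSupport, Set.indicator_apply, Set.mem_Ico, Finset.mem_Ico, Pi.one_apply]
    split_ifs <;> omega
  cases x with
  | a k =>
    rw [deg_a hp.le, mayDigit_add_mul_sum_pow hp (by omega) _ hn]
    simp only [digitSupport, Set.indicator_apply, Set.mem_Ico, Finset.mem_range, Pi.one_apply]
    split_ifs <;> omega
  | h i j => exact hdigit_h i j
  | b i j => exact hdigit_h i (j + 1)

theorem mayDigit_deg_add_mayDigit_deg_le {p : ℕ} (hp : 1 < p) (x : MayGen) {j₁ j₂ j₃ : ℤ}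
    (h1 : -1 ≤ j₁) (h12 : j₁ ≤ j₂) (h23 : j₂ ≤ j₃) :
    mayDigit p (x.deg p) j₁ + mayDigit p (x.deg p) j₃ ≤ mayDigit p (x.deg p) j₂ + 1 := by
  rw [mayDigit_deg hp x h1, mayDigit_deg hp x (h1.trans h12),
    mayDigit_deg hp x (h1.trans (h12.trans h23))]
  exact indicator_add_indicator_le_of_ordConnected x.ordConnected_digitSupport h12 h23

end MayGen

theorem stmt2_general {p : ℕ} (hp : 1 < p) (S : Multiset MayGen) {j₁ j₂ j₃ : ℤ} (h1 : -1 ≤ j₁)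
    (h12 : j₁ ≤ j₂) (h23 : j₂ ≤ j₃) :
    (S.map (fun x => mayDigit p (MayGen.deg p x) j₁)).sum +
      (S.map (fun x => mayDigit p (MayGen.deg p x) j₃)).sum ≤
    (S.map (fun x => mayDigit p (MayGen.deg p x) j₂)).sum + Multiset.card S :=
  calc
    _ = (S.map fun x ↦ mayDigit p (x.deg p) j₁ + mayDigit p (x.deg p) j₃).sum :=
      Multiset.sum_map_add.symm
    _ ≤ (S.map fun x ↦ mayDigit p (x.deg p) j₂ + 1).sum :=
      Multiset.sum_map_le_sum_map _ _ fun x _ ↦ x.mayDigit_deg_add_mayDigit_deg_le hp h1 h12 h23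
    _ = _ := by simp

/-- for May generators `x₁, …, x_m` and `c̄_j = Σᵢ c_j(deg xᵢ)`, for all
`-1 ≤ j₁ < j₂ < j₃` one has `c̄_{j₁} + c̄_{j₃} - m ≤ c̄_{j₂}`. -/
theorem stmt2 (p : ℕ) (hp : p.Prime) (hp5 : 5 ≤ p) (S : Multiset MayGen)
    (hval : ∀ x ∈ S, x.IsValid) (j₁ j₂ j₃ : ℤ) (h1 : -1 ≤ j₁) (h12 : j₁ < j₂) (h23 : j₂ < j₃) :
    (S.map (fun x => mayDigit p (MayGen.deg p x) j₁)).sum +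
      (S.map (fun x => mayDigit p (MayGen.deg p x) j₃)).sum ≤
    (S.map (fun x => mayDigit p (MayGen.deg p x) j₂)).sum + Multiset.card S :=
  stmt2_general hp.one_lt S h1 h12.le h23.le
end

section
/- Let p ≥ 5 be a prime, q = 2(p−1), and let m, n, s, r be integers with n ≥ m+2 > 5, 2 ≤ s < p, and 2 ≤ r ≤ s+3. Then there is no admissible monomial of total filtration s+3−r and total degree q(p^n + p^m + sp + s) + s − r − 1. (This is the combinatorial content of the vanishing of the May E₁-term E₁^{s+3−r, t(s)+s−r−1, *}, where t(s) = q(p^n + p^m + sp + s), which in turn yields Ext_A^{s+3−r, t(s)+s−r−1}(Z_p, Z_p) = 0.) -/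
/-! Every generator `x` has degree `parity x + 2 (p ^ e - p ^ f)`, where `e` and `f` are its top
and bottom exponents. Modulo `q = 2 (p - 1)` the degree of a monomial is thus its number of
generators `a_k`, which the filtration bound pins down to `s - r - 1`; the rest of the degree
gives `∑ p ^ e = (p - 1) (p ^ n + p ^ m + s p + s) + ∑ p ^ f` with at most `s + 1` summands on
each side. Modulo `p` this forces exactly `s` generators with `f = 0 < e`, so at most one further
generator, and `∑ p ^ e = (p - 1) (p ^ n + p ^ m) + s p ^ 2`, plus `p ^ f` for that
generator if there is one. A sum of `s + 1` powers of `p` has base-`p` digit sum at most `s + 1`.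
The right-hand side has a larger one, since adding a single power of `p` cannot cancel the digits
`p - 1` in both of the non-adjacent places `n` and `m`. -/

section SumDigits

variable {b : ℕ}

theorem sum_digits_eq_mod_add_sum_digits_div (hb : 1 < b) (x : ℕ) :
    (Nat.digits b x).sum = x % b + (Nat.digits b (x / b)).sum := by
  rcases x.eq_zero_or_pos with rfl | hx
  · simp
  · rw [Nat.digits_def' hb hx, List.sum_cons]

theorem sum_digits_of_lt {c : ℕ} (hc : c < b) : (Nat.digits b c).sum = c := by
  rcases eq_or_ne c 0 with rfl | h0
  · simp
  · simp [Nat.digits_of_lt b c h0 hc]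

-- The incoming carry `c` is arbitrary so that the induction absorbs the carry out of each digit.
theorem sum_digits_add_add_le (hb : 1 < b) (x y c : ℕ) :
    (Nat.digits b (x + y + c)).sum ≤ (Nat.digits b x).sum + (Nat.digits b y).sum + c := by
  induction hN : x + y using Nat.strong_induction_on generalizing x y c with
  | _ N ih =>
    subst hN
    rcases (x + y).eq_zero_or_pos with h0 | hpos
    · obtain ⟨rfl, rfl⟩ := Nat.add_eq_zero_iff.mp h0
      simpa using Nat.digit_sum_le b c
    · set k := x % b + y % b + c
      have hsplit : x + y + c = k + b * (x / b + y / b) := by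
        conv_lhs => rw [← Nat.mod_add_div x b, ← Nat.mod_add_div y b]
        ring
      have hmod : (x + y + c) % b = k % b := by rw [hsplit, Nat.add_mul_mod_self_left]
      have hdiv : (x + y + c) / b = x / b + y / b + k / b := by
        rw [hsplit, Nat.add_mul_div_left _ _ (by lia), add_comm]
      have hdecr : x / b + y / b < x + y :=
        Nat.div_add_div_le_add_div.trans_lt (Nat.div_lt_self hpos hb)
      have hcarry : k % b + k / b ≤ k := by
        nlinarith [Nat.mod_add_div k b, Nat.zero_le (k / b)]
      have hrec := ih _ hdecr (x / b) (y / b) (k / b) rfl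
      rw [sum_digits_eq_mod_add_sum_digits_div hb (x + y + c), hmod, hdiv,
        sum_digits_eq_mod_add_sum_digits_div hb x, sum_digits_eq_mod_add_sum_digits_div hb y]
      lia

theorem sum_digits_pow_mul_add (hb : 1 < b) {k c : ℕ} (hc : c < b ^ k) (x : ℕ) :
    (Nat.digits b (b ^ k * x + c)).sum = (Nat.digits b x).sum + (Nat.digits b c).sum := by
  rcases x.eq_zero_or_pos with rfl | hx
  · simp
  · obtain ⟨j, rfl⟩ := Nat.exists_eq_add_of_le ((Nat.digits_length_le_iff hb c).mpr hc)
    rw [add_comm, ← Nat.digits_append_zeroes_append_digits hb hx]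
    simp [add_comm]

theorem sum_digits_pow_mul (hb : 1 < b) (k x : ℕ) :
    (Nat.digits b (b ^ k * x)).sum = (Nat.digits b x).sum := by
  simpa using sum_digits_pow_mul_add hb (k := k) (c := 0) (by positivity) x

theorem sum_digits_pow (hb : 1 < b) (k : ℕ) : (Nat.digits b (b ^ k)).sum = 1 := by
  simpa [sum_digits_of_lt hb] using sum_digits_pow_mul hb k 1

theorem sum_digits_sum_map_pow_le_card (hb : 1 < b) {ι : Type*} (f : ι → ℕ) (S : Multiset ι) :
    (Nat.digits b (S.map fun x => b ^ f x).sum).sum ≤ S.card := by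
  induction S using Multiset.induction_on with
  | empty => simp
  | cons x S ih =>
    have hadd := sum_digits_add_add_le hb (b ^ f x) (S.map fun x => b ^ f x).sum 0
    rw [add_zero, sum_digits_pow hb] at hadd
    rw [Multiset.map_cons, Multiset.sum_cons, Multiset.card_cons]
    lia

theorem sum_digits_pow_mul_sub_one_add_sub_one (hb : 1 < b) {d : ℕ} (hd : d ≠ 0) :
    (Nat.digits b (b ^ d * (b - 1) + (b - 1))).sum = 2 * (b - 1) := by
  have hlt : b - 1 < b := by lia
  rw [sum_digits_pow_mul_add hb (hlt.trans_le (Nat.le_self_pow hd b)), sum_digits_of_lt hlt,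
    two_mul]

theorem two_le_sum_digits_pow_mul_sub_one_add_sub_one_add_pow (hb : 3 ≤ b) {d : ℕ}
    (hd : 2 ≤ d) (t : ℕ) :
    2 ≤ (Nat.digits b (b ^ d * (b - 1) + (b - 1) + b ^ t)).sum := by
  have hb1 : 1 < b := by lia
  have hlt : b - 1 < b := by lia
  rcases t with _ | t
  · have hcarry : b ^ d * (b - 1) + (b - 1) + b ^ 0 = b ^ d * (b - 1) + b ^ 1 := by
      rw [pow_zero, pow_one]
      lia
    rw [hcarry, sum_digits_pow_mul_add hb1 (Nat.pow_lt_pow_right hb1 hd), sum_digits_of_lt hlt,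
      sum_digits_pow hb1]
    lia
  · have hunits : b ^ d * (b - 1) + (b - 1) + b ^ (t + 1) =
        b ^ 1 * (b ^ (d - 1) * (b - 1) + b ^ t) + (b - 1) := by
      obtain ⟨e, rfl⟩ := Nat.exists_eq_add_of_le' hd
      rw [show e + 2 - 1 = e + 1 by lia]
      ring
    rw [hunits, sum_digits_pow_mul_add hb1 (by simpa using hlt), sum_digits_of_lt hlt]
    lia

end SumDigits

section Target

variable {p m n s : ℕ}

/-- The number `(p - 1) N + s` for `N = p ^ n + p ^ m + s p + s`: the value of `topSum` forced on
a monomial of degree `q N` that consists of `s` initial generators `h i j` or `b i j`. -/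
def topTarget (p m n s : ℕ) : ℕ := (p - 1) * (p ^ n + p ^ m) + s * p ^ 2

theorem topTarget_eq (hmn : m ≤ n) :
    topTarget p m n s = p ^ m * (p ^ (n - m) * (p - 1) + (p - 1)) + s * p ^ 2 := by
  obtain ⟨d, rfl⟩ := Nat.exists_eq_add_of_le hmn
  rw [topTarget, Nat.add_sub_cancel_left]
  ring

theorem mul_sq_lt_pow {k : ℕ} (hk : 3 ≤ k) (hsp : s < p) : s * p ^ 2 < p ^ k :=
  calc s * p ^ 2 < p * p ^ 2 := Nat.mul_lt_mul_of_pos_right hsp (pow_pos (by lia) 2)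
    _ = p ^ 3 := by ring
    _ ≤ p ^ k := Nat.pow_le_pow_right (by lia) hk

theorem sum_digits_topTarget (hp : 1 < p) (hmn : m < n) (hm : 3 ≤ m) (hsp : s < p) :
    (Nat.digits p (topTarget p m n s)).sum = 2 * (p - 1) + s := by
  rw [topTarget_eq hmn.le, sum_digits_pow_mul_add hp (mul_sq_lt_pow hm hsp),
    sum_digits_pow_mul_sub_one_add_sub_one hp (Nat.sub_ne_zero_of_lt hmn), mul_comm s,
    sum_digits_pow_mul hp, sum_digits_of_lt hsp]

theorem lt_sum_digits_topTarget_add_pow (hp : 3 ≤ p) (hmn : m + 2 ≤ n) (hm : 4 ≤ m) (hsp : s < p)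
    (t : ℕ) : s + 1 < (Nat.digits p (topTarget p m n s + p ^ t)).sum := by
  have hp1 : 1 < p := by lia
  rw [topTarget_eq (by lia), add_assoc]
  rcases lt_or_ge t m with htm | hmt
  · have hlow : s * p ^ 2 + p ^ t < p ^ m :=
      calc s * p ^ 2 + p ^ t < p ^ (m - 1) + p ^ (m - 1) :=
            add_lt_add_of_lt_of_le (mul_sq_lt_pow (by lia) hsp)
              (Nat.pow_le_pow_right (by lia) (by lia))
        _ = p ^ (m - 1) * 2 := by ring
        _ ≤ p ^ (m - 1) * p := by gcongr; lia
        _ = p ^ m := by rw [← pow_succ, Nat.sub_add_cancel (by lia)]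
    rw [sum_digits_pow_mul_add hp1 hlow, sum_digits_pow_mul_sub_one_add_sub_one hp1 (by lia)]
    lia
  · obtain ⟨u, rfl⟩ := Nat.exists_eq_add_of_le hmt
    have hfactor : p ^ m * (p ^ (n - m) * (p - 1) + (p - 1)) + (s * p ^ 2 + p ^ (m + u)) =
        p ^ m * (p ^ (n - m) * (p - 1) + (p - 1) + p ^ u) + s * p ^ 2 := by ring
    rw [hfactor, sum_digits_pow_mul_add hp1 (mul_sq_lt_pow (by lia) hsp),
      mul_comm s, sum_digits_pow_mul hp1, sum_digits_of_lt hsp]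
    have hhigh :=
      two_le_sum_digits_pow_mul_sub_one_add_sub_one_add_pow hp (d := n - m) (by lia) u
    lia

end Target

namespace MayGen

/-- The exponent `e` in the normal form `deg p x = parity x + 2 (p ^ e - p ^ f)`. -/
def topExp : MayGen → ℕ
  | a k => k
  | h i j => i + j
  | b i j => i + j + 1

/-- The exponent `f` in the normal form `deg p x = parity x + 2 (p ^ e - p ^ f)`. -/
def botExp : MayGen → ℕ
  | a _ => 0
  | h _ j => j
  | b _ j => j + 1

/-- The parity of the degree of a generator: `1` for the polynomial generators `a k`, `0` for
`h i j` and `b i j`. -/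
def parity : MayGen → ℕ
  | a _ => 1
  | h _ _ => 0
  | b _ _ => 0

/-- A generator is initial if the summand `p ^ 0` occurs in its degree, written as
`parity + q * ∑ p ^ j` with `j` running over `[botExp, topExp)`. -/
def IsInitial (x : MayGen) : Prop := x.botExp = 0 ∧ 0 < x.topExp

instance : DecidablePred IsInitial := fun _ => inferInstanceAs (Decidable (_ ∧ _))

theorem botExp_le_topExp (x : MayGen) : x.botExp ≤ x.topExp := by
  cases x <;> simp only [botExp, topExp] <;> lia

theorem parity_le_filt (x : MayGen) : x.parity ≤ x.filt := by
  cases x <;> simp [parity, filt]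

theorem one_le_filt (x : MayGen) : 1 ≤ x.filt := by
  cases x <;> simp [filt]

variable {p : ℕ}

theorem deg_add_two_mul_pow_botExp (hp : 0 < p) (x : MayGen) :
    x.deg p + 2 * p ^ x.botExp = x.parity + 2 * p ^ x.topExp := by
  have hpow (k : ℕ) : 1 ≤ p ^ k := Nat.one_le_pow _ _ hp
  cases x with
  | a k =>
    have := hpow k
    simp only [deg, parity, topExp, botExp]
    lia
  | h i j | b i j =>
    simp only [deg, parity, topExp, botExp]
    zify [hpow i]
    ring

theorem deg_modEq_parity (hp : 0 < p) (x : MayGen) : x.deg p ≡ x.parity [MOD 2 * (p - 1)] := by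
  have hdvd (i : ℕ) : 2 * (p - 1) ∣ 2 * (p ^ i - 1) :=
    mul_dvd_mul_left 2 (Nat.sub_one_dvd_pow_sub_one p i)
  cases x with
  | a k =>
    have hdeg : (a k).deg p = 2 * (p ^ k - 1) + 1 := by
      have := Nat.one_le_pow k p hp
      simp only [deg]
      lia
    rw [hdeg]
    exact (Nat.modEq_zero_iff_dvd.mpr (hdvd k)).add_right 1
  | h i j | b i j => exact Nat.modEq_zero_iff_dvd.mpr ((hdvd i).mul_right _)

theorem pow_botExp_modEq (x : MayGen) :
    p ^ x.botExp ≡ (if x.IsInitial then 1 else 0) + p ^ x.topExp [MOD p] := by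
  have hpow {k : ℕ} (hk : k ≠ 0) : p ^ k ≡ 0 [MOD p] :=
    Nat.modEq_zero_iff_dvd.mpr (dvd_pow_self p hk)
  rcases x.topExp.eq_zero_or_pos with htop | htop
  · have hbot : x.botExp = 0 := by have := x.botExp_le_topExp; lia
    simp [IsInitial, htop, hbot, Nat.ModEq.refl]
  · by_cases hbot : x.botExp = 0
    · simpa [IsInitial, htop, hbot] using (hpow htop.ne').symm.add_left 1
    · simpa [IsInitial, hbot] using (hpow hbot).trans (hpow htop.ne').symm

end MayGen

section Monomial

open MayGen

variable {p : ℕ}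

/-- The number of polynomial generators `a k` in a monomial. -/
def totalParity (S : Multiset MayGen) : ℕ := (S.map parity).sum

/-- The sum of `p ^ topExp` over the generators of a monomial. -/
def topSum (p : ℕ) (S : Multiset MayGen) : ℕ := (S.map fun x => p ^ x.topExp).sum

/-- The sum of `p ^ botExp` over the generators of a monomial. -/
def botSum (p : ℕ) (S : Multiset MayGen) : ℕ := (S.map fun x => p ^ x.botExp).sum

theorem totalParity_le_totalFilt (S : Multiset MayGen) : totalParity S ≤ totalFilt S :=
  Multiset.sum_map_le_sum_map _ _ fun x _ => x.parity_le_filt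

theorem card_le_totalFilt (S : Multiset MayGen) : S.card ≤ totalFilt S := by
  simpa [totalFilt] using
    Multiset.sum_map_le_sum_map (s := S) (fun _ => 1) filt fun x _ => x.one_le_filt

theorem totalDeg_add_two_mul_botSum (hp : 0 < p) (S : Multiset MayGen) :
    totalDeg p S + 2 * botSum p S = totalParity S + 2 * topSum p S := by
  simp only [totalDeg, botSum, totalParity, topSum, ← Multiset.sum_map_mul_left,
    ← Multiset.sum_map_add, deg_add_two_mul_pow_botExp hp]

theorem totalDeg_modEq_totalParity (hp : 0 < p) (S : Multiset MayGen) :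
    totalDeg p S ≡ totalParity S [MOD 2 * (p - 1)] :=
  .multisetSum_map fun x _ => x.deg_modEq_parity hp

theorem totalParity_eq_of_totalDeg_eq (hp : 0 < p) {S : Multiset MayGen} {N c : ℤ}
    (hdeg : (totalDeg p S : ℤ) = 2 * ((p : ℤ) - 1) * N + c)
    (hc : |(totalParity S : ℤ) - c| < 2 * ((p : ℤ) - 1)) : (totalParity S : ℤ) = c := by
  have hdvd : 2 * ((p : ℤ) - 1) ∣ totalParity S - totalDeg p S := by
    simpa [Nat.cast_sub hp] using (totalDeg_modEq_totalParity hp S).dvd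
  have hsplit : (totalParity S : ℤ) - c =
      (totalParity S - totalDeg p S) + 2 * ((p : ℤ) - 1) * N := by
    rw [hdeg]
    ring
  refine sub_eq_zero.mp (Int.eq_zero_of_abs_lt_dvd ?_ hc)
  rw [hsplit]
  exact dvd_add hdvd (dvd_mul_right _ N)

theorem botSum_modEq (S : Multiset MayGen) :
    botSum p S ≡ (S.filter IsInitial).card + topSum p S [MOD p] := by
  have hcard : (S.filter IsInitial).card = (S.map fun x => if x.IsInitial then 1 else 0).sum := by
    induction S using Multiset.induction_on with
    | empty => simp
    | cons x S ih => by_cases hx : x.IsInitial <;> simp [hx, ih, add_comm]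
  rw [hcard, topSum, ← Multiset.sum_map_add]
  exact .multisetSum_map fun x _ => x.pow_botExp_modEq

theorem botSum_eq_card_add_botSum (S : Multiset MayGen) :
    botSum p S = (S.filter IsInitial).card + botSum p (S.filter (¬ IsInitial ·)) := by
  have hinitial : ((S.filter IsInitial).map fun x => p ^ x.botExp) =
      (S.filter IsInitial).map fun _ => 1 :=
    Multiset.map_congr rfl fun x hx => by rw [(Multiset.mem_filter.mp hx).2.1, pow_zero]
  conv_lhs => rw [← Multiset.filter_add_not IsInitial S]
  simp [botSum, hinitial]

theorem card_filter_isInitial_eq {N s : ℕ} {S : Multiset MayGen} (hp : 1 < p) (hsp : s < p)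
    (hN : N ≡ s [MOD p]) (hcard : S.card ≤ s + 1)
    (htop : topSum p S = (p - 1) * N + botSum p S) : (S.filter IsInitial).card = s := by
  have hsum : N + topSum p S = p * N + botSum p S := by
    rw [htop, ← add_assoc]
    nth_rw 1 [← one_mul N]
    rw [← add_mul, Nat.add_sub_cancel' hp.le]
  have hmod : N + topSum p S ≡ (S.filter IsInitial).card + topSum p S [MOD p] := by
    rw [hsum]
    simpa using (Nat.modEq_zero_iff_dvd.mpr (dvd_mul_right p N)).add (botSum_modEq S)
  have hle : (S.filter IsInitial).card ≤ S.card := Multiset.card_le_card (Multiset.filter_le _ _)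
  refine ((Nat.ModEq.add_right_cancel' _ hmod).symm.trans hN).eq_of_abs_lt ?_
  rw [abs_lt]
  lia

theorem exists_topSum_eq_topTarget_add_botSum {m n s : ℕ} {S : Multiset MayGen} (hp : 1 < p)
    (hm : m ≠ 0) (hn : n ≠ 0) (hsp : s < p) (hcard : S.card ≤ s + 1)
    (htop : topSum p S = (p - 1) * (p ^ n + p ^ m + s * p + s) + botSum p S) :
    ∃ R : Multiset MayGen, R.card ≤ 1 ∧ topSum p S = topTarget p m n s + botSum p R := by
  have hN : p ^ n + p ^ m + s * p + s ≡ s [MOD p] := by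
    have hdvd : p ∣ p ^ n + p ^ m + s * p :=
      ((dvd_pow_self p hn).add (dvd_pow_self p hm)).add (dvd_mul_left p s)
    simpa using (Nat.modEq_zero_iff_dvd.mpr hdvd).add_right s
  have hinitial := card_filter_isInitial_eq hp hsp hN hcard htop
  refine ⟨S.filter (¬ IsInitial ·), ?_, ?_⟩
  · have hsplit := congrArg Multiset.card (Multiset.filter_add_not IsInitial S)
    rw [Multiset.card_add] at hsplit
    lia
  · rw [htop, botSum_eq_card_add_botSum, hinitial, topTarget]
    zify [hp.le]
    ring

theorem topSum_ne {m n s : ℕ} {S : Multiset MayGen} (hp : 3 ≤ p) (hmn : m + 2 ≤ n) (hm : 4 ≤ m)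
    (hsp : s < p) (hcard : S.card ≤ s + 1) :
    topSum p S ≠ (p - 1) * (p ^ n + p ^ m + s * p + s) + botSum p S := by
  intro htop
  have hdigits : (Nat.digits p (topSum p S)).sum ≤ s + 1 :=
    (sum_digits_sum_map_pow_le_card (by lia) topExp S).trans hcard
  obtain ⟨R, hR, htarget⟩ :=
    exists_topSum_eq_topTarget_add_botSum (by lia) (by lia) (by lia) hsp hcard htop
  refine hdigits.not_gt ?_
  rw [htarget]
  rcases Nat.le_one_iff_eq_zero_or_eq_one.mp hR with h0 | h1
  · have hzero : botSum p R = 0 := by simp [Multiset.card_eq_zero.mp h0, botSum]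
    rw [hzero, add_zero, sum_digits_topTarget (by lia) (by lia) (by lia) hsp]
    lia
  · obtain ⟨x, rfl⟩ := Multiset.card_eq_one.mp h1
    simpa [botSum] using lt_sum_digits_topTarget_add_pow hp hmn hm hsp x.botExp

end Monomial

theorem stmt6_general {p : ℕ} (hp : 4 ≤ p) {m n s r : ℕ} (hmn : m + 2 ≤ n) (hm : 4 ≤ m)
    (hsp : s < p) (hr : 2 ≤ r) {S : Multiset MayGen} (hfilt : (totalFilt S : ℤ) ≤ s + 3 - r) :
    (totalDeg p S : ℤ) ≠
      2 * ((p : ℤ) - 1) * ((p : ℤ) ^ n + (p : ℤ) ^ m + s * p + s) + s - r - 1 := by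
  intro hdeg
  have hcard := card_le_totalFilt S
  have hparity_le := totalParity_le_totalFilt S
  have hparity : (totalParity S : ℤ) = s - r - 1 :=
    totalParity_eq_of_totalDeg_eq (p := p) (N := (p : ℤ) ^ n + (p : ℤ) ^ m + s * p + s)
      (by lia) (by rw [hdeg]; ring) (by rw [abs_lt]; lia)
  refine topSum_ne (by lia) hmn hm hsp (show S.card ≤ s + 1 by lia) ?_
  have htotal := totalDeg_add_two_mul_botSum (p := p) (by lia) S
  zify [show 1 ≤ p by lia] at htotal ⊢
  linarith

/-- for `n ≥ m+2 > 5`, `2 ≤ s < p`, `2 ≤ r ≤ s+3`, there is no admissible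
monomial of total filtration `s+3-r` and total degree `q(pⁿ + pᵐ + sp + s) + s - r - 1`. -/
theorem stmt6 (p : ℕ) (hp : p.Prime) (hp5 : 5 ≤ p) (m n s r : ℕ)
    (hmn : m + 2 ≤ n) (hm : 5 < m + 2) (hs2 : 2 ≤ s) (hsp : s < p)
    (hr2 : 2 ≤ r) (hrs : r ≤ s + 3) :
    ¬ ∃ S : Multiset MayGen, (∀ x ∈ S, x.IsValid) ∧ Admissible S ∧
      (totalFilt S : ℤ) = (s : ℤ) + 3 - r ∧
      (totalDeg p S : ℤ) =
        2 * ((p : ℤ) - 1) * ((p : ℤ) ^ n + (p : ℤ) ^ m + s * p + s) + s - r - 1 := by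
  rintro ⟨S, -, -, hfilt, hdeg⟩
  exact stmt6_general (by lia) hmn (by lia) hsp hr2 hfilt.le hdeg
end

section
/- Let p ≥ 5 be a prime, q = 2(p−1), and let m, n be integers with n ≥ m+2 > 5. Then the unique admissible monomial of total filtration 4 and total degree q(3p^{n−1} + ⋯ + 3p^{m+1} + 4p^m + ⋯ + 4p² + 3p + 3) + 1 is the multiset {a_n, h_{m+1,0}, h_{n,0}, h_{n−2,2}}. (This is the combinatorial content of the computation E₁^{4, t', *} = Z_p{a_n h_{m+1,0} h_{n,0} h_{n−2,2}} used in the proof of Lemma 3.1.) -/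
/-!
Apart from a contribution `1` for each `a k`, the degree of a generator is `q` times a sum of
consecutive powers of `p`, so a monomial of degree `t` writes `(t - #{a k}) / q` in base `p` with
`j`-th coefficient the number of its generators whose interval of exponents contains `j`.
A monomial of filtration `4` has at most four factors and `4 < p`, so no carry ever occurs and
these coefficients are the digits of `t`. In the case at hand some digit equals `4`, which forces
four intervals with a common point. Such a family of intervals is determined by its digits up to
the pairing of left with right endpoints, and exteriority of the `h i j` leaves one pairing.
-/

section Numerals

theorem eq_of_sum_mul_pow_eq {b N : ℕ} {f g : ℕ → ℕ} (hf : ∀ j < N, f j < b)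
    (hg : ∀ j < N, g j < b)
    (h : ∑ j ∈ Finset.range N, f j * b ^ j = ∑ j ∈ Finset.range N, g j * b ^ j) :
    ∀ j < N, f j = g j := by
  intro j hj
  let F : Fin N → Fin b := fun i => ⟨f i, hf i i.isLt⟩
  let G : Fin N → Fin b := fun i => ⟨g i, hg i i.isLt⟩
  have hFG : F = G := finFunctionFinEquiv.injective <| Fin.ext <| by
    simpa only [finFunctionFinEquiv_apply_val, F, G,
      Fin.sum_univ_eq_sum_range (fun i => f i * b ^ i),
      Fin.sum_univ_eq_sum_range (fun i => g i * b ^ i)] using h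
  exact congrArg Fin.val (congrFun hFG ⟨j, hj⟩)

theorem eq_and_eq_of_mul_add_eq {q a b r s : ℕ} (hr : r < q) (hs : s < q)
    (h : q * a + r = q * b + s) : a = b ∧ r = s := by
  have hrs : r = s := by
    simpa only [Nat.mul_add_mod, Nat.mod_eq_of_lt hr, Nat.mod_eq_of_lt hs] using congrArg (· % q) h
  subst hrs
  exact ⟨Nat.eq_of_mul_eq_mul_left (by omega) (Nat.add_right_cancel h), rfl⟩

theorem sub_one_mul_sum_Ico_pow_add {p : ℕ} (hp : 1 ≤ p) {s t : ℕ} (hst : s ≤ t) :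
    (p - 1) * ∑ j ∈ Finset.Ico s t, p ^ j + p ^ s = p ^ t := by
  zify [hp]
  rw [mul_comm, geom_sum_Ico_mul (p : ℤ) hst, sub_add_cancel]

end Numerals

section Multisets

theorem multiset_eq_of_countP_le_eq {M N : Multiset ℕ}
    (h : ∀ j, M.countP (· ≤ j) = N.countP (· ≤ j)) : M = N := by
  have count_succ (K : Multiset ℕ) (j : ℕ) :
      K.count (j + 1) + K.countP (· ≤ j) = K.countP (· ≤ j + 1) := by
    induction K using Multiset.induction with
    | empty => rfl
    | cons x K ih =>
      simp only [Multiset.count_cons, Multiset.countP_cons]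
      split_ifs <;> omega
  ext j
  cases j with
  | zero => simpa only [Nat.le_zero, Multiset.count, eq_comm] using h 0
  | succ j =>
    have hM := count_succ M j
    have hN := count_succ N j
    rw [h, h] at hM
    omega

theorem exists_eq_cons_of_map_eq_cons {α β : Type*} {f : α → β} {S : Multiset α}
    {b : β} {t : Multiset β} (h : S.map f = b ::ₘ t) :
    ∃ x T, S = x ::ₘ T ∧ f x = b ∧ T.map f = t := by
  classical
  obtain ⟨x, hx, hb, ht⟩ := (Multiset.map_eq_cons f S t b).2 h
  exact ⟨x, S.erase x, (Multiset.cons_erase hx).symm, hb, ht⟩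

theorem eq_of_insert_eq_insert_of_ne {α : Type*} {k s t u n r : α} (hst : s ≠ t) (hrn : r ≠ n)
    (h : ({k, s, t, u} : Multiset α) = {n, r, n, n}) :
    k = n ∧ u = n ∧ (s = r ∧ t = n ∨ s = n ∧ t = r) := by
  classical
  have hmem (x) (hx : x ∈ ({k, s, t, u} : Multiset α)) : x = n ∨ x = r := by
    have : x ∈ ({n, r, n, n} : Multiset α) := h ▸ hx
    simp only [Multiset.insert_eq_cons, Multiset.mem_cons, Multiset.mem_singleton] at this
    tauto
  have hcount := congrArg (Multiset.count r) h
  have hs := hmem s (by simp)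
  have ht := hmem t (by simp)
  have hk := hmem k (by simp)
  have hu := hmem u (by simp)
  simp only [Multiset.insert_eq_cons, Multiset.count_cons, Multiset.count_singleton, if_true,
    hrn, if_false] at hcount
  grind

end Multisets

namespace MayGen

/-- The least exponent occurring in the expansion of `deg p g`, see `deg_eq`. -/
def lower : MayGen → ℕ
  | a _ => 0
  | h _ j => j
  | b _ j => j + 1

/-- The strict upper bound of the exponents occurring in the expansion of `deg p g`,
see `deg_eq`. -/
def upper : MayGen → ℕ
  | a k => k
  | h i j => i + j
  | b i j => i + (j + 1)

/-- Recognizes the generators `a k`, the only ones whose degree is not divisible by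
`2 * (p - 1)`. -/
def isA : MayGen → Bool
  | a _ => true
  | h _ _ => false
  | b _ _ => false

/-- The number of generators of the monomial `S` (with multiplicity) whose interval of exponents
`[lower, upper)` contains `j`; this is the coefficient of `2 * (p - 1) * p ^ j` in the degree
of `S`. -/
def coverage (S : Multiset MayGen) (j : ℕ) : ℕ := S.countP fun g => g.lower ≤ j ∧ j < g.upper

theorem lower_le_upper (g : MayGen) : g.lower ≤ g.upper := by
  cases g <;> simp only [lower, upper] <;> omega

theorem one_le_filt_s12 (g : MayGen) : 1 ≤ g.filt := by
  cases g <;> simp only [filt] <;> omega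

theorem exists_eq_a_of_isA {g : MayGen} (hg : g.isA) : ∃ k, g = a k := by
  cases g <;> simp_all [isA]

theorem exists_eq_h_of_filt_eq_one {g : MayGen} (hg : g.filt = 1) (hA : ¬ g.isA) :
    ∃ i j, g = h i j := by
  cases g <;> simp_all [isA, filt]

section Degree

variable {p : ℕ}

theorem deg_eq (hp : 1 ≤ p) (g : MayGen) :
    g.deg p = 2 * (p - 1) * ∑ j ∈ Finset.Ico g.lower g.upper, p ^ j + if g.isA then 1 else 0 := by
  have hsum := sub_one_mul_sum_Ico_pow_add hp g.lower_le_upper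
  rw [mul_assoc, Nat.eq_sub_of_add_eq hsum]
  cases g with
  | a k =>
    have := Nat.one_le_pow k p hp
    simp only [deg, lower, upper, isA, pow_zero, if_true]
    omega
  | h i j => simp [deg, lower, upper, isA, pow_add, mul_assoc, Nat.sub_mul]
  | b i j => simp [deg, lower, upper, isA, pow_add, mul_assoc, Nat.sub_mul]

theorem totalDeg_eq (hp : 1 ≤ p) {N : ℕ} {S : Multiset MayGen} (hN : ∀ g ∈ S, g.upper ≤ N) :
    totalDeg p S =
      2 * (p - 1) * ∑ j ∈ Finset.range N, coverage S j * p ^ j + S.countP (isA ·) := by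
  induction S using Multiset.induction with
  | empty => simp [totalDeg, coverage]
  | cons g S ih =>
    have hg : ∑ j ∈ Finset.Ico g.lower g.upper, p ^ j =
        ∑ j ∈ Finset.range N, (if g.lower ≤ j ∧ j < g.upper then 1 else 0) * p ^ j := by
      have : Finset.Ico g.lower g.upper =
          {j ∈ Finset.range N | g.lower ≤ j ∧ j < g.upper} := by
        have := hN g (Multiset.mem_cons_self g S)
        ext j
        simp only [Finset.mem_Ico, Finset.mem_filter, Finset.mem_range]
        omega
      simp only [this, Finset.sum_filter, ite_mul, one_mul, zero_mul]
    have hS := ih fun x hx => hN x (Multiset.mem_cons_of_mem hx)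
    simp only [totalDeg, coverage, Multiset.map_cons, Multiset.sum_cons, Multiset.countP_cons,
      add_mul, Finset.sum_add_distrib] at hS ⊢
    rw [hS, deg_eq hp, hg]
    ring

theorem coverage_le_card (S : Multiset MayGen) (j : ℕ) : coverage S j ≤ S.card :=
  Multiset.countP_le_card _ S

theorem countP_isA_eq_and_coverage_eq_of_totalDeg_eq (hp : 2 ≤ p) {S T : Multiset MayGen}
    (hS : S.card < p) (hT : T.card < p) (h : totalDeg p S = totalDeg p T) :
    S.countP (isA ·) = T.countP (isA ·) ∧ coverage S = coverage T := by
  have hSA := Multiset.countP_le_card (isA ·) S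
  have hTA := Multiset.countP_le_card (isA ·) T
  have key (N : ℕ) (hN : ∀ g ∈ S + T, g.upper ≤ N) :
      (∀ j < N, coverage S j = coverage T j) ∧ S.countP (isA ·) = T.countP (isA ·) := by
    simp only [Multiset.mem_add, or_imp, forall_and] at hN
    rw [totalDeg_eq (by omega) hN.1, totalDeg_eq (by omega) hN.2] at h
    refine (eq_and_eq_of_mul_add_eq (by omega) (by omega) h).imp_left ?_
    exact eq_of_sum_mul_pow_eq (fun j _ => (coverage_le_card S j).trans_lt hS)
      (fun j _ => (coverage_le_card T j).trans_lt hT)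
  have hle (g) (hg : g ∈ S + T) : g.upper ≤ ((S + T).map upper).sup :=
    Multiset.le_sup (Multiset.mem_map_of_mem upper hg)
  refine ⟨(key _ hle).2, funext fun j => ?_⟩
  exact (key (((S + T).map upper).sup + (j + 1)) fun g hg => (hle g hg).trans (by omega)).1
    j (by omega)

end Degree

section Filtration

theorem card_le_totalFilt (S : Multiset MayGen) : S.card ≤ totalFilt S := by
  simpa [totalFilt] using Multiset.card_nsmul_le_sum (s := S.map filt) (a := 1)
    (by simpa using fun g _ => one_le_filt_s12 g)

theorem filt_eq_one_of_totalFilt_le_card {S : Multiset MayGen} (hS : totalFilt S ≤ S.card) :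
    ∀ g ∈ S, g.filt = 1 := by
  intro g hg
  obtain ⟨T, rfl⟩ := Multiset.exists_cons_of_mem hg
  have hT := card_le_totalFilt T
  have := one_le_filt_s12 g
  simp only [totalFilt, Multiset.map_cons, Multiset.sum_cons, Multiset.card_cons] at hS hT
  omega

end Filtration

section CommonPoint

variable {S T : Multiset MayGen} {c : ℕ}

theorem countP_lower_le_eq_coverage_min (hS : ∀ g ∈ S, g.lower ≤ c ∧ c < g.upper) (j : ℕ) :
    S.countP (·.lower ≤ j) = coverage S (min j c) :=
  Multiset.countP_congr rfl fun g hg => propext <| by have := hS g hg; omega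

theorem countP_lt_upper_eq_coverage_max (hS : ∀ g ∈ S, g.lower ≤ c ∧ c < g.upper) (j : ℕ) :
    S.countP (j < ·.upper) = coverage S (max j c) :=
  Multiset.countP_congr rfl fun g hg => propext <| by have := hS g hg; omega

theorem map_lower_eq_of_coverage_eq (hS : ∀ g ∈ S, g.lower ≤ c ∧ c < g.upper)
    (hT : ∀ g ∈ T, g.lower ≤ c ∧ c < g.upper) (h : coverage S = coverage T) :
    S.map lower = T.map lower :=
  multiset_eq_of_countP_le_eq fun j => by
    simp only [Multiset.countP_map, ← Multiset.countP_eq_card_filter,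
      countP_lower_le_eq_coverage_min hS, countP_lower_le_eq_coverage_min hT, h]

theorem map_upper_eq_of_coverage_eq (hS : ∀ g ∈ S, g.lower ≤ c ∧ c < g.upper)
    (hT : ∀ g ∈ T, g.lower ≤ c ∧ c < g.upper) (h : coverage S = coverage T) :
    S.map upper = T.map upper := by
  have hcard : S.card = T.card := by
    rw [← Multiset.countP_eq_card.2 hS, ← Multiset.countP_eq_card.2 hT]
    exact congrFun h c
  refine multiset_eq_of_countP_le_eq fun j => ?_
  simp only [Multiset.countP_map, ← Multiset.countP_eq_card_filter]
  have hSj := S.card_eq_countP_add_countP (·.upper ≤ j)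
  have hTj := T.card_eq_countP_add_countP (·.upper ≤ j)
  simp only [not_le, countP_lt_upper_eq_coverage_max hS, h] at hSj
  simp only [not_le, countP_lt_upper_eq_coverage_max hT] at hTj
  omega

end CommonPoint

section Uniqueness

variable {S : Multiset MayGen} {n r c : ℕ}

theorem exists_eq_h_h_h_of_map_lower_eq (hS : ∀ g ∈ S, ∃ i j, g = h i j)
    (hlower : S.map lower = {0, 0, c}) : ∃ s t i, S = {h s 0, h t 0, h i c} := by
  obtain ⟨x, S, rfl, hx, hlower⟩ := exists_eq_cons_of_map_eq_cons hlower
  obtain ⟨y, S, rfl, hy, hlower⟩ := exists_eq_cons_of_map_eq_cons hlower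
  obtain ⟨z, rfl, hz⟩ := Multiset.map_eq_singleton.1 hlower
  obtain ⟨s, _, rfl⟩ := hS x (by simp)
  obtain ⟨t, _, rfl⟩ := hS y (by simp)
  obtain ⟨i, _, rfl⟩ := hS z (by simp)
  simp only [lower] at hx hy hz
  exact ⟨s, t, i, by rw [hx, hy, hz]; rfl⟩

theorem eq_a_h_h_h_of_map_lower_eq_of_map_upper_eq (hrn : r ≠ n) (hadm : Admissible S)
    (hfilt : ∀ g ∈ S, g.filt = 1) (hA : S.countP (isA ·) = 1)
    (hlower : S.map lower = {0, 0, 0, c}) (hupper : S.map upper = {n, r, n, n}) :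
    S = {a n, h r 0, h n 0, h (n - c) c} := by
  obtain ⟨g, hgS, hg⟩ := Multiset.countP_pos.1 (hA ▸ Nat.one_pos)
  obtain ⟨k, rfl⟩ := exists_eq_a_of_isA hg
  obtain ⟨T, rfl⟩ := Multiset.exists_cons_of_mem hgS
  have hTA : T.countP (isA ·) = 0 := by
    rwa [Multiset.countP_cons_of_pos (p := (isA ·)) T hg, Nat.add_eq_right] at hA
  have hTh : ∀ g ∈ T, ∃ i j, g = h i j := fun g hg =>
    exists_eq_h_of_filt_eq_one (hfilt g (Multiset.mem_cons_of_mem hg))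
      (Multiset.countP_eq_zero.1 hTA g hg)
  have hTlower : T.map lower = {0, 0, c} := by
    simpa only [Multiset.map_cons, lower, Multiset.insert_eq_cons, Multiset.cons_inj_right]
      using hlower
  obtain ⟨s, t, i, rfl⟩ := exists_eq_h_h_h_of_map_lower_eq hTh hTlower
  have hst : s ≠ t := by
    rintro rfl
    have := hadm s 0
    simp at this
  obtain ⟨rfl, hi, hrest⟩ := eq_of_insert_eq_insert_of_ne hst hrn hupper
  obtain rfl : i = k - c := Nat.eq_sub_of_add_eq hi
  rcases hrest with ⟨rfl, rfl⟩ | ⟨rfl, rfl⟩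
  · rfl
  · exact congrArg (a _ ::ₘ ·) (Multiset.cons_swap _ _ _)

theorem eq_a_h_h_h_of_totalDeg_eq {p : ℕ} (hp : 5 ≤ p) (hcr : c < r) (hrn : r < n)
    (hadm : Admissible S) (hfilt : totalFilt S = 4)
    (hdeg : totalDeg p S = totalDeg p {a n, h r 0, h n 0, h (n - c) c}) :
    S = {a n, h r 0, h n 0, h (n - c) c} := by
  set T : Multiset MayGen := {a n, h r 0, h n 0, h (n - c) c} with hT
  have hTcard : T.card = 4 := rfl
  have hScard := card_le_totalFilt S
  obtain ⟨hA, hcov⟩ :=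
    countP_isA_eq_and_coverage_eq_of_totalDeg_eq (by omega) (by omega) (by omega) hdeg
  have hTc : ∀ g ∈ T, g.lower ≤ c ∧ c < g.upper := by
    simp only [hT, Multiset.insert_eq_cons, Multiset.mem_cons, Multiset.mem_singleton]
    rintro g (rfl | rfl | rfl | rfl) <;> simp only [lower, upper] <;> omega
  have hcovc : coverage S c = 4 := by rw [hcov, ← hTcard]; exact Multiset.countP_eq_card.2 hTc
  have hScard4 : S.card = 4 := le_antisymm (by omega) (hcovc ▸ coverage_le_card S c)
  have hSc : ∀ g ∈ S, g.lower ≤ c ∧ c < g.upper :=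
    Multiset.countP_eq_card.1 (hcovc.trans hScard4.symm)
  refine eq_a_h_h_h_of_map_lower_eq_of_map_upper_eq hrn.ne hadm
    (filt_eq_one_of_totalFilt_le_card (by omega)) (hA.trans rfl) ?_ ?_
  · rw [map_lower_eq_of_coverage_eq hSc hTc hcov]
    rfl
  · rw [map_upper_eq_of_coverage_eq hSc hTc hcov]
    simp [hT, upper, Nat.sub_add_cancel (hcr.trans hrn).le]

end Uniqueness

section Monomial

variable {n r c : ℕ}

theorem isValid_of_mem_a_h_h_h (hr : 0 < r) (hcn : c < n) :
    ∀ g ∈ ({a n, h r 0, h n 0, h (n - c) c} : Multiset MayGen), g.IsValid := by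
  simp only [Multiset.insert_eq_cons, Multiset.mem_cons, Multiset.mem_singleton]
  rintro g (rfl | rfl | rfl | rfl) <;> simp only [IsValid] <;> omega

theorem admissible_a_h_h_h (hc : 0 < c) (hrn : r ≠ n) :
    Admissible {a n, h r 0, h n 0, h (n - c) c} := by
  have hnodup : ({a n, h r 0, h n 0, h (n - c) c} : Multiset MayGen).Nodup := by
    simp [hrn, hc.ne]
  exact fun i j => Multiset.nodup_iff_count_le_one.1 hnodup (h i j)

theorem totalDeg_a_h_h_h {p m : ℕ} (hp : 1 ≤ p) (hm : 1 ≤ m) (hmn : m < n) :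
    totalDeg p {a n, h (m + 1) 0, h n 0, h (n - 2) 2} =
      2 * (p - 1) * (3 * ∑ j ∈ Finset.Icc (m + 1) (n - 1), p ^ j +
        4 * ∑ j ∈ Finset.Icc 2 m, p ^ j + 3 * p + 3) + 1 := by
  have hIcc : Finset.Icc (m + 1) (n - 1) = Finset.Ico (m + 1) n := by
    ext j; simp only [Finset.mem_Icc, Finset.mem_Ico]; omega
  have hIcc' : Finset.Icc 2 m = Finset.Ico 2 (m + 1) := by
    ext j; simp only [Finset.mem_Icc, Finset.mem_Ico]; omega
  have hlow : ∑ j ∈ Finset.Ico 0 2, p ^ j = 1 + p := by simp [Finset.sum_range_succ]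
  have hsum_m : ∑ j ∈ Finset.Ico 0 (m + 1), p ^ j =
      1 + p + ∑ j ∈ Finset.Ico 2 (m + 1), p ^ j := by
    rw [← hlow, Finset.sum_Ico_consecutive _ (by omega) (by omega)]
  have hsum_two_n : ∑ j ∈ Finset.Ico 2 n, p ^ j =
      ∑ j ∈ Finset.Ico 2 (m + 1), p ^ j + ∑ j ∈ Finset.Ico (m + 1) n, p ^ j :=
    (Finset.sum_Ico_consecutive _ (by omega) hmn).symm
  have hsum_n : ∑ j ∈ Finset.Ico 0 n, p ^ j = 1 + p + ∑ j ∈ Finset.Ico 2 n, p ^ j := by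
    rw [← hlow, Finset.sum_Ico_consecutive _ (by omega) (by omega)]
  have hn2 : n - 2 + 2 = n := Nat.sub_add_cancel (by omega)
  simp only [totalDeg, Multiset.insert_eq_cons, Multiset.map_cons, Multiset.map_singleton,
    Multiset.sum_cons, Multiset.sum_singleton, deg_eq hp, lower, upper, isA, hIcc, hIcc', add_zero,
    hn2, hsum_m, hsum_n, hsum_two_n, if_true, Bool.false_eq_true, if_false]
  ring

end Monomial

end MayGen

open MayGen in
theorem stmt12_general {p m n : ℕ} (hp : 5 ≤ p) (hm : 2 ≤ m) (hmn : m + 2 ≤ n)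
    (S : Multiset MayGen) :
    ((∀ x ∈ S, x.IsValid) ∧ Admissible S ∧ totalFilt S = 4 ∧
        totalDeg p S =
          2 * (p - 1) * (3 * ∑ j ∈ Finset.Icc (m + 1) (n - 1), p ^ j +
            4 * ∑ j ∈ Finset.Icc 2 m, p ^ j + 3 * p + 3) + 1) ↔
      S = {a n, h (m + 1) 0, h n 0, h (n - 2) 2} := by
  rw [← totalDeg_a_h_h_h (by omega) (by omega) (by omega)]
  constructor
  · rintro ⟨-, hadm, hfilt, hdeg⟩
    exact eq_a_h_h_h_of_totalDeg_eq hp (by omega) (by omega) hadm hfilt hdeg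
  · rintro rfl
    exact ⟨isValid_of_mem_a_h_h_h (by omega) (by omega),
      admissible_a_h_h_h two_pos (by omega), rfl, rfl⟩

/-- for `n ≥ m+2 > 5`, the unique admissible monomial of total filtration `4`
and total degree `q(3p^{n-1} + ⋯ + 3p^{m+1} + 4p^m + ⋯ + 4p² + 3p + 3) + 1` is
`{a n, h (m+1) 0, h n 0, h (n-2) 2}`. -/
theorem stmt12 (p : ℕ) (hp : p.Prime) (hp5 : 5 ≤ p) (m n : ℕ)
    (hmn : m + 2 ≤ n) (hm : 5 < m + 2) (S : Multiset MayGen) :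
    ((∀ x ∈ S, x.IsValid) ∧ Admissible S ∧ totalFilt S = 4 ∧
        totalDeg p S =
          2 * (p - 1) * (3 * ∑ j ∈ Finset.Icc (m + 1) (n - 1), p ^ j +
            4 * ∑ j ∈ Finset.Icc 2 m, p ^ j + 3 * p + 3) + 1) ↔
      S = {MayGen.a n, MayGen.h (m + 1) 0, MayGen.h n 0, MayGen.h (n - 2) 2} := by
  exact stmt12_general hp5 (by omega) hmn S
end
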